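/- arXiv:2511.16149 — 2 statements merged into one kernel-verified Lean document; each statement's English description precedes it below -/
import Mathlib

section
/- Let K ∈ ℕ₀, N ∈ ℕ with N ≥ 1, r := ⌈(K+3)/2⌉, and let f : ℝ → ℝ be continuous, 2π-periodic, with absolutely summable Fourier coefficients. Define J_{N,K} as the normalized Jackson kernel (1/λ)(sin((⌊N/2⌋+1)t/2)/sin(t/2))^{2r} and (T_{N,K} f)(x) := ∫_{-π}^{π} J_{N,K}(t) ∑_{k=1}^{K+1} (-1)^{k+1} binom(K+1,k) f(x+kt) dt. Then T_{N,K} f is a real trigonometric polynomial of degree at most r⌊N/2⌋; more precisely, (T_{N,K} f)(x) = (2π/λ) ∑_{n=-r⌊N/2⌋}^{r⌊N/2⌋} m_{n,K} f̂(n) e^{i n x}, where m_{n,K} := ∑_{k: 1 ≤ k ≤ K+1, k|n| ≤ r⌊N/2⌋} (-1)^{k+1} binom(K+1,k) m̃_{k|n|}, with m̃_l := |{m ∈ {−⌊N/2⌋/2, ..., ⌊N/2⌋/2}^{2r} : ∑_j m_j = l}|. -/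
open Complex Real intervalIntegral

/-!
With `M = ⌊N/2⌋`, the quotient `sin((M+1)t/2) / sin(t/2)` is the centred geometric sum
`∑_{a=0}^{M} e^{i(a - M/2)t}`. Expanding its `2r`-th power shows that the `l`-th Fourier coefficient
of the Jackson kernel is, up to the normalizing factor, the number of `2r`-tuples summing to `l`,
which is even in `l` and vanishes for `|l| > rM`. Since the Fourier series of `f` converges
absolutely, `∫ J(t) f(x + kt) dt` can be integrated termwise: the frequency `n` of `f` meets the
frequency `-kn` of the kernel, so only `k|n| ≤ rM` contributes.
-/

/-- The number `m̃_l` of `2r`-tuples in `{-M/2, …, M/2}` with sum `l`. Each entry is shifted by `M/2`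
so as to lie in `Fin (M + 1)`, which shifts the sum by `rM`. -/
def centeredTupleCount (r M : ℕ) (l : ℤ) : ℕ :=
  (Finset.univ.filter fun v : Fin (2 * r) → Fin (M + 1) =>
    ∑ j, (v j : ℤ) = l + r * M).card

section TupleCount

variable (r M : ℕ)

lemma centeredTupleCount_neg (l : ℤ) :
    centeredTupleCount r M (-l) = centeredTupleCount r M l := by
  refine Finset.card_equiv (Equiv.piCongrRight fun _ => Fin.revPerm) fun v => ?_
  have sum_rev : ∑ j, ((Fin.rev (v j) : ℕ) : ℤ) = 2 * (r * M) - ∑ j, (v j : ℤ) := by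
    have val_rev (j) : ((Fin.rev (v j) : ℕ) : ℤ) = M - (v j : ℤ) := by rw [Fin.val_rev]; omega
    simp only [val_rev, Finset.sum_sub_distrib, Finset.sum_const, Finset.card_univ,
      Fintype.card_fin, nsmul_eq_mul]
    push_cast
    ring
  simp only [Finset.mem_filter_univ, Equiv.piCongrRight_apply, Pi.map_apply, Fin.revPerm_apply,
    sum_rev]
  constructor <;> intro h <;> linarith

lemma centeredTupleCount_abs (l : ℤ) :
    centeredTupleCount r M |l| = centeredTupleCount r M l := by
  rcases abs_choice l with h | h <;> rw [h]
  exact centeredTupleCount_neg r M l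

lemma centeredTupleCount_eq_zero_of_lt {l : ℤ} (hl : (r * M : ℤ) < l) :
    centeredTupleCount r M l = 0 := by
  refine Finset.card_eq_zero.2 (Finset.filter_eq_empty_iff.2 fun v _ hv => ?_)
  have sum_le : ∑ j, (v j : ℤ) ≤ ∑ _j : Fin (2 * r), (M : ℤ) :=
    Finset.sum_le_sum fun j _ => by omega
  simp only [Finset.sum_const, Finset.card_univ, Fintype.card_fin, nsmul_eq_mul] at sum_le
  push_cast at sum_le
  linarith

end TupleCount

lemma exp_I_mul_sub_one (z : ℂ) :
    Complex.exp (I * z) - 1 = 2 * I * Complex.exp (I * z / 2) * Complex.sin (z / 2) := by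
  have hsq : Complex.exp (I * z) = Complex.exp (I * z / 2) * Complex.exp (I * z / 2) := by
    rw [← Complex.exp_add, add_halves]
  have hinv : Complex.exp (I * z / 2) * Complex.exp (-(I * z / 2)) = 1 := by
    rw [← Complex.exp_add, add_neg_cancel, Complex.exp_zero]
  rw [Complex.sin, hsq, show -(z / 2) * I = -(I * z / 2) by ring,
    show z / 2 * I = I * z / 2 by ring]
  linear_combination hinv -
    Complex.exp (I * z / 2) * (Complex.exp (-(I * z / 2)) - Complex.exp (I * z / 2)) * I_sq

lemma sum_exp_centered_mul_sin (M : ℕ) (z : ℂ) :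
    (∑ a : Fin (M + 1), Complex.exp (I * (a - M / 2) * z)) * Complex.sin (z / 2) =
      Complex.sin ((M + 1) * z / 2) := by
  have geom := geom_sum_mul (Complex.exp (I * z)) (M + 1)
  rw [← Complex.exp_nat_mul, show ((M + 1 : ℕ) : ℂ) * (I * z) = I * ((M + 1) * z) by
    push_cast; ring, exp_I_mul_sub_one, exp_I_mul_sub_one] at geom
  have uncenter : ∑ i ∈ Finset.range (M + 1), Complex.exp (I * z) ^ i =
      Complex.exp (I * M * z / 2) * ∑ a : Fin (M + 1), Complex.exp (I * (a - M / 2) * z) := by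
    rw [Finset.mul_sum, ← Fin.sum_univ_eq_sum_range]
    refine Finset.sum_congr rfl fun a _ => ?_
    rw [← Complex.exp_nat_mul, ← Complex.exp_add]
    ring_nf
  have split : Complex.exp (I * ((M + 1) * z) / 2) =
      Complex.exp (I * M * z / 2) * Complex.exp (I * z / 2) := by
    rw [← Complex.exp_add]
    ring_nf
  rw [uncenter, split] at geom
  have hne : 2 * I * Complex.exp (I * M * z / 2) * Complex.exp (I * z / 2) ≠ 0 := by
    simp [Complex.exp_ne_zero]
  refine mul_left_cancel₀ hne ?_
  linear_combination geom

lemma sum_exp_centered_pow (r M : ℕ) (z : ℂ) :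
    (∑ a : Fin (M + 1), Complex.exp (I * (a - M / 2) * z)) ^ (2 * r) =
      ∑ v : Fin (2 * r) → Fin (M + 1),
        Complex.exp (I * ((∑ j, (v j : ℤ) - r * M : ℤ) : ℂ) * z) := by
  rw [Fintype.sum_pow]
  refine Finset.sum_congr rfl fun v _ => ?_
  rw [← Complex.exp_sum, ← Finset.sum_mul, ← Finset.mul_sum, Finset.sum_sub_distrib]
  simp only [Finset.sum_const, Finset.card_univ, Fintype.card_fin, nsmul_eq_mul]
  push_cast
  ring_nf

/-- The Jackson kernel without its normalizing factor, for use on `[-π, π]`: it carries its limit as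
the value at `t = 0`, but a junk value (from division by zero) at other multiples of `2π`. -/
noncomputable def jacksonKernel (r M : ℕ) (t : ℝ) : ℝ :=
  if t = 0 then ((M : ℝ) + 1) ^ (2 * r)
  else (Real.sin (((M : ℝ) + 1) * t / 2) / Real.sin (t / 2)) ^ (2 * r)

lemma jacksonKernel_eq_sum_exp (r M : ℕ) {t : ℝ} (ht : t ∈ Set.Icc (-π) π) :
    (jacksonKernel r M t : ℂ) = ∑ v : Fin (2 * r) → Fin (M + 1),
      Complex.exp (I * ((∑ j, (v j : ℤ) - r * M : ℤ) : ℂ) * t) := by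
  rw [← sum_exp_centered_pow, jacksonKernel]
  split_ifs with h
  · simp [h]
  · have hsin : Real.sin (t / 2) ≠ 0 := by
      rw [Ne, Real.sin_eq_zero_iff_of_lt_of_lt (by linarith [ht.1, Real.pi_pos])
        (by linarith [ht.2, Real.pi_pos])]
      simpa using h
    have hsin' : Complex.sin (t / 2) ≠ 0 := by exact_mod_cast hsin
    rw [eq_div_of_mul_eq hsin' (sum_exp_centered_mul_sin M t)]
    push_cast
    rfl

lemma intervalIntegrable_jacksonKernel (r M : ℕ) :
    IntervalIntegrable (fun t => (jacksonKernel r M t : ℂ)) MeasureTheory.volume (-π) π := by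
  refine ContinuousOn.intervalIntegrable_of_Icc (by linarith [Real.pi_pos]) ?_
  exact ContinuousOn.congr (by fun_prop) fun t ht => jacksonKernel_eq_sum_exp r M ht

lemma integral_exp_int_mul (l : ℤ) :
    ∫ t in (-π)..π, Complex.exp (I * l * t) = if l = 0 then 2 * (π : ℂ) else 0 := by
  split_ifs with h
  · simp [h, two_mul]
  · have periodic : Complex.exp (I * l * π) = Complex.exp (I * l * (-π : ℝ)) :=
      Complex.exp_eq_exp_iff_exists_int.2 ⟨l, by push_cast; ring⟩
    rw [integral_exp_mul_complex (by simp [h]), periodic, sub_self, zero_div]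

lemma integral_jacksonKernel_mul_exp (r M : ℕ) (l : ℤ) :
    ∫ t in (-π)..π, (jacksonKernel r M t : ℂ) * Complex.exp (I * l * t) =
      2 * π * centeredTupleCount r M l := by
  calc
    _ = ∫ t in (-π)..π, ∑ v : Fin (2 * r) → Fin (M + 1),
          Complex.exp (I * ((∑ j, (v j : ℤ) - r * M + l : ℤ) : ℂ) * t) := by
      refine integral_congr fun t ht => ?_
      rw [Set.uIcc_of_le (by linarith [Real.pi_pos])] at ht
      simp only [jacksonKernel_eq_sum_exp r M ht, Finset.sum_mul]
      refine Finset.sum_congr rfl fun v _ => ?_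
      rw [← Complex.exp_add, ← add_mul, ← mul_add, ← Int.cast_add]
    _ = ∑ v : Fin (2 * r) → Fin (M + 1),
          if ∑ j, (v j : ℤ) - r * M + l = 0 then 2 * (π : ℂ) else 0 := by
      rw [integral_finsetSum fun v _ => Continuous.intervalIntegrable (by fun_prop) _ _]
      simp only [integral_exp_int_mul]
    _ = 2 * π * centeredTupleCount r M (-l) := by
      rw [← Finset.sum_filter, Finset.sum_const, nsmul_eq_mul, mul_comm, centeredTupleCount]
      simp only [← eq_neg_iff_add_eq_zero, sub_eq_iff_eq_add]
    _ = 2 * π * centeredTupleCount r M l := by rw [centeredTupleCount_neg]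

section FourierSeries

variable {f : ℝ → ℂ} {c : ℤ → ℂ}

lemma norm_exp_I_mul_int_mul (n : ℤ) (y : ℝ) : ‖Complex.exp (I * n * y)‖ = 1 := by
  rw [show I * n * y = I * ((n * y : ℝ) : ℂ) by push_cast; ring]
  exact Complex.norm_exp_I_mul_ofReal _

lemma hasSum_fourierSeries (hsum : Summable fun n => ‖c n‖)
    (hser : ∀ y : ℝ, f y = ∑' n : ℤ, c n * Complex.exp (I * n * y)) (y : ℝ) :
    HasSum (fun n : ℤ => c n * Complex.exp (I * n * y)) (f y) := by
  rw [hser y]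
  refine (Summable.of_norm ?_).hasSum
  simpa only [norm_mul, norm_exp_I_mul_int_mul, mul_one] using hsum

lemma hasSum_integral_mul_fourierSeries (hsum : Summable fun n => ‖c n‖)
    (hser : ∀ y : ℝ, f y = ∑' n : ℤ, c n * Complex.exp (I * n * y))
    {g : ℝ → ℂ} {a b : ℝ} (hg : IntervalIntegrable g MeasureTheory.volume a b) (k : ℤ) (x : ℝ) :
    HasSum (fun n : ℤ => c n * Complex.exp (I * n * x) *
        ∫ t in a..b, g t * Complex.exp (I * (k * n : ℤ) * t))
      (∫ t in a..b, g t * f (x + k * t)) := by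
  have term_eq (n : ℤ) : c n * Complex.exp (I * n * x) *
      ∫ t in a..b, g t * Complex.exp (I * (k * n : ℤ) * t) =
        ∫ t in a..b, g t * (c n * Complex.exp (I * n * (x + k * t : ℝ))) := by
    rw [← integral_const_mul]
    refine integral_congr fun t _ => ?_
    have exp_split : Complex.exp (I * n * (x + k * t : ℝ)) =
        Complex.exp (I * n * x) * Complex.exp (I * (k * n : ℤ) * t) := by
      rw [← Complex.exp_add]
      push_cast
      ring_nf
    simp only [exp_split]
    ring
  simp only [term_eq]
  refine hasSum_integral_of_dominated_convergence (fun n t => ‖g t‖ * ‖c n‖) ?_ ?_ ?_ ?_ ?_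
  · exact fun n => hg.def'.aestronglyMeasurable.mul
      (Continuous.aestronglyMeasurable (by fun_prop))
  · exact fun n => .of_forall fun t _ => by rw [norm_mul, norm_mul, norm_exp_I_mul_int_mul, mul_one]
  · exact .of_forall fun t _ => hsum.mul_left _
  · simpa only [tsum_mul_left] using hg.norm.mul_const _
  · exact .of_forall fun t _ => (hasSum_fourierSeries hsum hser _).mul_left _

lemma continuous_of_hasSum_fourierSeries (hsum : Summable fun n => ‖c n‖)
    (hser : ∀ y : ℝ, f y = ∑' n : ℤ, c n * Complex.exp (I * n * y)) :
    Continuous f := by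
  rw [funext hser]
  refine continuous_tsum (fun n => by fun_prop) hsum fun n y => ?_
  rw [norm_mul, norm_exp_I_mul_int_mul, mul_one]

lemma integral_jacksonKernel_mul_comp (r M : ℕ) (hsum : Summable fun n => ‖c n‖)
    (hser : ∀ y : ℝ, f y = ∑' n : ℤ, c n * Complex.exp (I * n * y))
    {k : ℕ} (hk : k ≠ 0) (x : ℝ) :
    ∫ t in (-π)..π, (jacksonKernel r M t : ℂ) * f (x + k * t) =
      2 * π * ∑ n ∈ Finset.Icc (-(r * M : ℤ)) (r * M : ℤ),
        centeredTupleCount r M (k * |n|) * c n * Complex.exp (I * n * x) := by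
  have coeff_eq (n : ℤ) :
      centeredTupleCount r M (k * n) = centeredTupleCount r M (k * |n|) := by
    rw [← centeredTupleCount_abs, abs_mul, Nat.abs_cast]
  have key := hasSum_integral_mul_fourierSeries hsum hser (intervalIntegrable_jacksonKernel r M) k x
  simp only [integral_jacksonKernel_mul_exp, Int.cast_natCast] at key
  rw [key.unique (hasSum_sum_of_ne_finset_zero (s := Finset.Icc (-(r * M : ℤ)) (r * M)) ?_),
    Finset.mul_sum]
  · exact Finset.sum_congr rfl fun n _ => by rw [coeff_eq]; ring
  · intro n hn
    rw [Finset.mem_Icc, ← abs_le, not_le] at hn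
    have frequency_gt : (r * M : ℤ) < k * |n| :=
      hn.trans_le (le_mul_of_one_le_left (abs_nonneg n) (by exact_mod_cast hk.bot_lt))
    rw [coeff_eq, centeredTupleCount_eq_zero_of_lt r M frequency_gt, Nat.cast_zero, mul_zero,
      mul_zero]

theorem jackson_operator_is_trig_poly_general (r M : ℕ) (hsum : Summable fun n => ‖c n‖)
    (hser : ∀ y : ℝ, f y = ∑' n : ℤ, c n * Complex.exp (I * n * y))
    {s : Finset ℕ} (hs : 0 ∉ s) (w : ℕ → ℂ) (x : ℝ) :
    ∫ t in (-π)..π, (jacksonKernel r M t : ℂ) * ∑ k ∈ s, w k * f (x + k * t) =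
      2 * π * ∑ n ∈ Finset.Icc (-(r * M : ℤ)) (r * M : ℤ),
        (∑ k ∈ s with ((k : ℕ) : ℤ) * |n| ≤ r * M, w k * centeredTupleCount r M (k * |n|)) *
          c n * Complex.exp (I * n * x) := by
  have hf := continuous_of_hasSum_fourierSeries hsum hser
  have drop_filter (n : ℤ) :
      ∑ k ∈ s with ((k : ℕ) : ℤ) * |n| ≤ r * M, w k * centeredTupleCount r M (k * |n|) =
        ∑ k ∈ s, w k * (centeredTupleCount r M (k * |n|) : ℂ) := by
    refine Finset.sum_filter_of_ne fun k _ hk => ?_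
    contrapose! hk
    rw [centeredTupleCount_eq_zero_of_lt r M hk, Nat.cast_zero, mul_zero]
  calc
    _ = ∑ k ∈ s, w k * ∫ t in (-π)..π, (jacksonKernel r M t : ℂ) * f (x + k * t) := by
      simp only [← integral_const_mul]
      rw [← integral_finsetSum fun k _ => ((intervalIntegrable_jacksonKernel r M).mul_continuousOn
        (by fun_prop)).const_mul (w k)]
      simp only [Finset.mul_sum, mul_left_comm]
    _ = ∑ k ∈ s, w k * (2 * π * ∑ n ∈ Finset.Icc (-(r * M : ℤ)) (r * M : ℤ),
          centeredTupleCount r M (k * |n|) * c n * Complex.exp (I * n * x)) :=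
      Finset.sum_congr rfl fun k hk => by
        rw [integral_jacksonKernel_mul_comp r M hsum hser (ne_of_mem_of_not_mem hk hs)]
    _ = _ := by
      simp only [drop_filter, Finset.mul_sum, Finset.sum_mul]
      rw [Finset.sum_comm]
      exact Finset.sum_congr rfl fun n _ => Finset.sum_congr rfl fun k _ => by ring

end FourierSeries

/-- The univariate Jackson operator `T_{N,K} f` is a trigonometric polynomial:
`(T_{N,K} f)(x) = (2π/λ) ∑_{n=-r⌊N/2⌋}^{r⌊N/2⌋} m_{n,K} f̂(n) e^{inx}`, where
`r = ⌈(K+3)/2⌉`, `m_{n,K} = ∑_{1≤k≤K+1, k|n|≤r⌊N/2⌋} (-1)^{k+1} C(K+1,k) m̃_{k|n|}`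
and `m̃_l` counts tuples in `{-⌊N/2⌋/2,…,⌊N/2⌋/2}^{2r}` summing to `l`. -/
theorem jackson_operator_is_trig_poly (K N : ℕ) (hN : 1 ≤ N)
    (f : ℝ → ℝ) (hf_cont : Continuous f) (hf_per : Function.Periodic f (2 * π))
    (c : ℤ → ℂ)
    (hc : ∀ n : ℤ, c n = (1 / (2 * π)) *
      ∫ s in (-π)..π, Complex.exp (-Complex.I * (n : ℂ) * (s : ℂ)) * (f s : ℂ))
    (hsum : Summable fun n : ℤ => ‖c n‖)
    (hser : ∀ y : ℝ, (f y : ℂ) = ∑' n : ℤ, c n * Complex.exp (Complex.I * (n : ℂ) * (y : ℂ)))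
    (lam : ℝ) (hlam : 0 < lam) :
    let r : ℕ := (K + 3 + 1) / 2
    let M : ℕ := N / 2
    let gker : ℝ → ℝ := fun t =>
      if t = 0 then ((M : ℝ) + 1) ^ (2 * r)
      else (Real.sin (((M : ℝ) + 1) * t / 2) / Real.sin (t / 2)) ^ (2 * r)
    let J : ℝ → ℝ := fun t => (1 / lam) * gker t
    let mt : ℤ → ℕ := fun l =>
      (Finset.univ.filter fun v : Fin (2 * r) → Fin (M + 1) =>
        (∑ j, ((v j : ℤ))) = l + r * M).card
    let m : ℤ → ℤ := fun n =>
      ∑ k ∈ (Finset.Icc 1 (K + 1)).filter (fun (k : ℕ) => (k : ℤ) * |n| ≤ (r * M : ℤ)),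
        (-1 : ℤ) ^ (k + 1) * (Nat.choose (K + 1) k : ℤ) * (mt ((k : ℤ) * |n|) : ℤ)
    (∫ t in (-π)..π, J t) = 1 →
    ∀ x : ℝ,
      ((∫ t in (-π)..π, J t * ∑ k ∈ Finset.Icc 1 (K + 1),
          (-1 : ℝ) ^ (k + 1) * (Nat.choose (K + 1) k : ℝ) * f (x + k * t) : ℝ) : ℂ)
        = (2 * π / lam : ℂ) *
            ∑ n ∈ Finset.Icc (-(r * M : ℤ)) (r * M : ℤ),
              (m n : ℂ) * c n * Complex.exp (Complex.I * (n : ℂ) * (x : ℂ)) := by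
  intro r M gker J mt m _ x
  have gker_eq : gker = jacksonKernel r M := rfl
  have mt_eq : mt = centeredTupleCount r M := rfl
  have key := jackson_operator_is_trig_poly_general r M hsum hser (s := Finset.Icc 1 (K + 1))
    (by simp) (fun k => (-1) ^ (k + 1) * (K + 1).choose k) x
  simp only [J, m, gker_eq, mt_eq, mul_assoc, integral_const_mul, Int.cast_sum] at key ⊢
  push_cast [← integral_ofReal]
  linear_combination 1 / (lam : ℂ) * key
end

section
/- Let K ∈ ℕ₀ and let f : ℝ → ℝ be 2π-periodic and (K+1)-times continuously differentiable. Then there exists a constant C_K > 0 depending only on K such that for every N ≥ 1 there exists a real trigonometric polynomial T of degree at most ⌈(K+3)/2⌉·⌊N/2⌋ with sup_{x∈ℝ} |f(x) − T(x)| ≤ C_K · ‖f^{(K+1)}‖_∞ / N^{K+1}. -/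
open Real

/-!
Convolution with the Fejér–Korovkin kernel of degree `n`, whose mean of `|t|` is `O(1/n)`,
approximates an `L`-Lipschitz function to within `O(L/n)` by a trigonometric polynomial. The error
operator `R f = f - kernelMean w f` commutes with differentiation, so by the mean value inequality
each further application of `R` gains another factor `O(1/n)`, at the cost of one derivative:
`R^[K + 1] f` is `O(n^(-(K + 1)))`. Since `f - R^[K + 1] f` is again a trigonometric polynomial of
degree `n`, it is the required approximation.
-/

open scoped NNReal

section TrigPolynomial

variable {E : Type*} [AddCommGroup E] [Module ℝ E] {n : ℕ}

variable (E n) in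
/-- The trigonometric polynomials of degree at most `n` with coefficients in `E`. The coefficient
`b 0` is redundant, since it multiplies `sin 0`. -/
def trigPolynomial : Submodule ℝ (ℝ → E) where
  carrier := {T | ∃ a b : ℕ → E, ∀ x,
    T x = ∑ k ∈ Finset.range (n + 1), (cos (k * x) • a k + sin (k * x) • b k)}
  zero_mem' := ⟨0, 0, by simp⟩
  add_mem' := by
    rintro S T ⟨a, b, hS⟩ ⟨c, d, hT⟩
    refine ⟨a + c, b + d, fun x => ?_⟩
    simp only [Pi.add_apply, hS, hT, ← Finset.sum_add_distrib]
    exact Finset.sum_congr rfl fun k _ => by module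
  smul_mem' := by
    rintro r T ⟨a, b, hT⟩
    refine ⟨r • a, r • b, fun x => ?_⟩
    simp only [Pi.smul_apply, hT, Finset.smul_sum]
    exact Finset.sum_congr rfl fun k _ => by module

lemma mem_trigPolynomial {T : ℝ → E} :
    T ∈ trigPolynomial E n ↔ ∃ a b : ℕ → E, ∀ x,
      T x = ∑ k ∈ Finset.range (n + 1), (cos (k * x) • a k + sin (k * x) • b k) :=
  Iff.rfl

lemma exists_const_add_sum_Icc_of_mem_trigPolynomial {T : ℝ → E} (hT : T ∈ trigPolynomial E n) :
    ∃ a b : ℕ → E, ∀ x,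
      T x = a 0 + ∑ k ∈ Finset.Icc 1 n, (cos (k * x) • a k + sin (k * x) • b k) := by
  obtain ⟨a, b, hT⟩ := hT
  refine ⟨a, b, fun x => ?_⟩
  rw [hT, Finset.range_eq_Ico, Finset.sum_eq_sum_Ico_succ_bot n.succ_pos]
  simp [Finset.Ico_add_one_right_eq_Icc]

lemma cos_int_mul_mem_trigPolynomial {m : ℤ} (hm : m.natAbs ≤ n) :
    (fun x => cos (m * x)) ∈ trigPolynomial ℝ n := by
  refine ⟨Pi.single m.natAbs 1, 0, fun x => ?_⟩
  have cos_natAbs : cos (m * x) = cos (m.natAbs * x) := by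
    rw [← cos_abs, abs_mul, ← cos_abs (m.natAbs * x), abs_mul, Nat.cast_natAbs, Int.cast_abs,
      abs_abs]
  simp [Pi.single_apply, cos_natAbs, Nat.lt_succ_of_le hm]

lemma periodic_of_mem_trigPolynomial {T : ℝ → E} (hT : T ∈ trigPolynomial E n) :
    Function.Periodic T (2 * π) := by
  obtain ⟨a, b, hT⟩ := hT
  intro x
  simp only [hT, mul_add, cos_add_nat_mul_two_pi, sin_add_nat_mul_two_pi]

lemma continuous_of_mem_trigPolynomial [TopologicalSpace E] [ContinuousAdd E] [ContinuousSMul ℝ E]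
    {T : ℝ → E} (hT : T ∈ trigPolynomial E n) : Continuous T := by
  obtain ⟨a, b, hT⟩ := hT
  rw [funext hT]
  fun_prop

end TrigPolynomial

section KernelMean

variable {E : Type*} [NormedAddCommGroup E] [NormedSpace ℝ E] {w : ℝ → ℝ} {f f' : ℝ → E}

/-- The mean of `f` against the kernel `w` over one period. -/
noncomputable def kernelMean (w : ℝ → ℝ) (f : ℝ → E) (x : ℝ) : E :=
  ∫ t in (-π)..π, w t • f (x + t)

/-- The error `f - kernelMean w f` of approximation by kernel means, as an operator to be
iterated. -/
noncomputable def kernelError (w : ℝ → ℝ) (f : ℝ → E) : ℝ → E :=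
  f - kernelMean w f

lemma kernelMean_eq_integral_sub (hw : Function.Periodic w (2 * π))
    (hf : Function.Periodic f (2 * π)) (x : ℝ) :
    kernelMean w f x = ∫ u in (-π)..π, w (u - x) • f u := by
  have hper : Function.Periodic (fun u => w (u - x) • f u) (2 * π) := fun u => by
    simp only [hf u, add_sub_right_comm, hw (u - x)]
  calc kernelMean w f x = ∫ t in (-π)..π, w (x + t - x) • f (x + t) := by
        simp only [kernelMean, add_sub_cancel_left]
    _ = ∫ u in (x + -π)..(x + -π + 2 * π), w (u - x) • f u := by
        rw [intervalIntegral.integral_comp_add_left (fun u => w (u - x) • f u)]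
        ring_nf
    _ = ∫ u in (-π)..π, w (u - x) • f u := by
        rw [hper.intervalIntegral_add_eq _ (-π)]
        ring_nf

lemma kernelMean_mem_trigPolynomial {n : ℕ} (hw : w ∈ trigPolynomial ℝ n) (hf : Continuous f)
    (hp : Function.Periodic f (2 * π)) : kernelMean w f ∈ trigPolynomial E n := by
  obtain ⟨a, b, hab⟩ := mem_trigPolynomial.1 hw
  refine mem_trigPolynomial.2
    ⟨fun k => ∫ u in (-π)..π, (a k * cos (k * u) + b k * sin (k * u)) • f u,
      fun k => ∫ u in (-π)..π, (a k * sin (k * u) - b k * cos (k * u)) • f u, fun x => ?_⟩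
  rw [kernelMean_eq_integral_sub (periodic_of_mem_trigPolynomial hw) hp]
  simp only [hab, Finset.sum_smul]
  rw [intervalIntegral.integral_finsetSum fun k _ =>
    Continuous.intervalIntegrable (by fun_prop) _ _]
  refine Finset.sum_congr rfl fun k _ => ?_
  simp only [← intervalIntegral.integral_smul]
  rw [← intervalIntegral.integral_add (Continuous.intervalIntegrable (by fun_prop) _ _)
    (Continuous.intervalIntegrable (by fun_prop) _ _)]
  congr 1 with u
  rw [mul_sub, cos_sub, sin_sub]
  module

lemma continuous_kernelMean (hw : Continuous w) (hf : Continuous f) :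
    Continuous (kernelMean w f) :=
  intervalIntegral.continuous_parametric_intervalIntegral_of_continuous' (by fun_prop) _ _

lemma continuous_kernelError (hw : Continuous w) (hf : Continuous f) :
    Continuous (kernelError w f) :=
  hf.sub (continuous_kernelMean hw hf)

lemma hasDerivAt_kernelMean (hw : Continuous w) (hf : ∀ x, HasDerivAt f (f' x) x)
    (hf' : Continuous f') (x : ℝ) : HasDerivAt (kernelMean w f) (kernelMean w f' x) x := by
  have hfc : Continuous f := continuous_iff_continuousAt.2 fun x => (hf x).continuousAt
  obtain ⟨C, hC⟩ : ∃ C, ∀ p ∈ Metric.closedBall x 1 ×ˢ Set.uIcc (-π) π,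
      ‖w p.2 • f' (p.1 + p.2)‖ ≤ C :=
    ((isCompact_closedBall x 1).prod isCompact_uIcc).exists_bound_of_continuousOn
      (by fun_prop : Continuous fun p : ℝ × ℝ => w p.2 • f' (p.1 + p.2)).continuousOn
  refine (intervalIntegral.hasDerivAt_integral_of_dominated_loc_of_deriv_le
    (F := fun y t => w t • f (y + t)) (F' := fun y t => w t • f' (y + t)) (bound := fun _ => C)
    (Metric.closedBall_mem_nhds x one_pos) (.of_forall fun y => ?_) ?_ ?_ ?_
    intervalIntegrable_const ?_).2
  · exact Continuous.aestronglyMeasurable (by fun_prop)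
  · exact Continuous.intervalIntegrable (by fun_prop) _ _
  · exact Continuous.aestronglyMeasurable (by fun_prop)
  · exact .of_forall fun t ht y hy => hC (y, t) ⟨hy, Set.uIoc_subset_uIcc ht⟩
  · exact .of_forall fun t _ y _ => ((hf (y + t)).comp_add_const y t).const_smul (w t)

lemma hasDerivAt_iterate_kernelError (hw : Continuous w) (hf : ∀ x, HasDerivAt f (f' x) x)
    (hf' : Continuous f') (k : ℕ) (x : ℝ) :
    HasDerivAt ((kernelError w)^[k] f) ((kernelError w)^[k] f' x) x := by
  induction k generalizing f f' with
  | zero => exact hf x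
  | succ _ ih =>
    exact ih (fun y => (hf y).sub (hasDerivAt_kernelMean hw hf hf' y))
      (continuous_kernelError hw hf')

lemma sub_iterate_kernelError_mem_trigPolynomial {n : ℕ} (hw : w ∈ trigPolynomial ℝ n)
    (hf : Continuous f) (hp : Function.Periodic f (2 * π)) (k : ℕ) :
    f - (kernelError w)^[k] f ∈ trigPolynomial E n := by
  induction k with
  | zero => simp
  | succ k ih =>
    set g := (kernelError w)^[k] f
    have hg : g = f - (f - g) := (sub_sub_cancel f g).symm
    have hgc : Continuous g := hg ▸ hf.sub (continuous_of_mem_trigPolynomial ih)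
    have hgp : Function.Periodic g (2 * π) := hg ▸ hp.sub (periodic_of_mem_trigPolynomial ih)
    rw [Function.iterate_succ_apply', kernelError, ← sub_add]
    exact add_mem ih (kernelMean_mem_trigPolynomial hw hgc hgp)

lemma norm_kernelError_le [CompleteSpace E] (hw : Continuous w) (hw0 : ∀ t, 0 ≤ w t)
    (hw1 : ∫ t in (-π)..π, w t = 1) {L : ℝ≥0} (hf : LipschitzWith L f) (x : ℝ) :
    ‖kernelError w f x‖ ≤ (∫ t in (-π)..π, w t * |t|) * L := by
  have hfc := hf.continuous
  have error_eq : kernelError w f x = ∫ t in (-π)..π, w t • (f x - f (x + t)) := by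
    simp only [smul_sub]
    rw [intervalIntegral.integral_sub (Continuous.intervalIntegrable (by fun_prop) _ _)
      (Continuous.intervalIntegrable (by fun_prop) _ _), intervalIntegral.integral_smul_const, hw1,
      one_smul]
    rfl
  rw [error_eq, ← intervalIntegral.integral_mul_const]
  refine intervalIntegral.norm_integral_le_of_norm_le (by linarith [pi_pos])
    (.of_forall fun t _ => ?_) (Continuous.intervalIntegrable (by fun_prop) _ _)
  calc ‖w t • (f x - f (x + t))‖ = w t * ‖f x - f (x + t)‖ := by
        rw [norm_smul, norm_of_nonneg (hw0 t)]
    _ ≤ w t * (L * |t|) := by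
        gcongr
        · exact hw0 t
        · simpa using hf.norm_sub_le x (x + t)
    _ = w t * |t| * L := by ring

lemma norm_iterate_kernelError_le [CompleteSpace E] (hw : Continuous w) (hw0 : ∀ t, 0 ≤ w t)
    (hw1 : ∫ t in (-π)..π, w t = 1) {c : ℝ≥0} (hc : ∫ t in (-π)..π, w t * |t| ≤ c) {K : ℕ}
    (hf : ContDiff ℝ K f) {L : ℝ≥0} (hL : LipschitzWith L (iteratedDeriv K f)) (x : ℝ) :
    ‖(kernelError w)^[K + 1] f x‖ ≤ c ^ (K + 1) * L := by
  have lipschitz_bound {g : ℝ → E} {M : ℝ≥0} (hg : LipschitzWith M g) (y : ℝ) :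
      ‖kernelError w g y‖ ≤ c * M :=
    (norm_kernelError_le hw hw0 hw1 hg y).trans (by gcongr)
  induction K generalizing f x with
  | zero => simpa using lipschitz_bound (by simpa using hL) x
  | succ K ih =>
    have hf' : ContDiff ℝ K (deriv f) := (contDiff_succ_iff_deriv.1 (mod_cast hf)).2.2
    have hderiv := hasDerivAt_iterate_kernelError hw
      (fun y => (hf.differentiable (by simp) y).hasDerivAt) hf'.continuous (K + 1)
    have lipschitz_iterate : LipschitzWith (c ^ (K + 1) * L) ((kernelError w)^[K + 1] f) := by
      refine lipschitzWith_of_nnnorm_deriv_le (fun y => (hderiv y).differentiableAt) fun y => ?_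
      rw [(hderiv y).deriv]
      exact ih hf' (by rwa [← iteratedDeriv_succ']) y
    rw [Function.iterate_succ_apply']
    refine (lipschitz_bound lipschitz_iterate x).trans_eq ?_
    push_cast
    ring

end KernelMean

lemma abs_le_add_mul_one_sub_cos {h t : ℝ} (hh : 0 < h) (ht : |t| ≤ π) :
    |t| ≤ h / 2 + π ^ 2 / (4 * h) * (1 - cos t) := by
  have sq_le : t ^ 2 ≤ π ^ 2 / 2 * (1 - cos t) := by
    have := cos_le_one_sub_mul_cos_sq ht
    calc t ^ 2 = π ^ 2 / 2 * (2 / π ^ 2 * t ^ 2) := by field_simp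
      _ ≤ π ^ 2 / 2 * (1 - cos t) := by gcongr; linarith
  calc |t| ≤ |t| + (|t| - h) ^ 2 / (2 * h) := le_add_of_nonneg_right (by positivity)
    _ = h / 2 + t ^ 2 / (2 * h) := by rw [← sq_abs t]; field_simp; ring
    _ ≤ h / 2 + π ^ 2 / 2 * (1 - cos t) / (2 * h) := by gcongr
    _ = h / 2 + π ^ 2 / (4 * h) * (1 - cos t) := by field_simp; ring

lemma integral_mul_abs_le {w : ℝ → ℝ} (hw : Continuous w) (hw0 : ∀ t, 0 ≤ w t)
    (hw1 : ∫ t in (-π)..π, w t = 1) {h : ℝ} (hh : 0 < h) :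
    ∫ t in (-π)..π, w t * |t| ≤
      h / 2 + π ^ 2 / (4 * h) * (1 - ∫ t in (-π)..π, w t * cos t) := by
  have integrable {g : ℝ → ℝ} (hg : Continuous g) :
      IntervalIntegrable g MeasureTheory.volume (-π) π := hg.intervalIntegrable _ _
  calc ∫ t in (-π)..π, w t * |t|
      ≤ ∫ t in (-π)..π, w t * (h / 2 + π ^ 2 / (4 * h) * (1 - cos t)) := by
        refine intervalIntegral.integral_mono_on (by linarith [pi_pos]) (integrable (by fun_prop))
          (integrable (by fun_prop)) fun t ht => ?_
        exact mul_le_mul_of_nonneg_left (abs_le_add_mul_one_sub_cos hh (abs_le.2 ht)) (hw0 t)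
    _ = ∫ t in (-π)..π, (w t * (h / 2 + π ^ 2 / (4 * h)) - w t * cos t * (π ^ 2 / (4 * h))) := by
        congr 1 with t
        ring
    _ = h / 2 + π ^ 2 / (4 * h) * (1 - ∫ t in (-π)..π, w t * cos t) := by
        rw [intervalIntegral.integral_sub (integrable (by fun_prop)) (integrable (by fun_prop)),
          intervalIntegral.integral_mul_const, intervalIntegral.integral_mul_const, hw1]
        ring

lemma integral_cos_int_mul (m : ℤ) :
    ∫ t in (-π)..π, cos (m * t) = if m = 0 then 2 * π else 0 := by
  split_ifs with hm
  · simp [hm, two_mul]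
  · rw [intervalIntegral.integral_comp_mul_left (fun t => cos t) (Int.cast_ne_zero.2 hm)]
    simp

lemma integral_cos_int_mul_mul_cos (m : ℤ) :
    ∫ t in (-π)..π, cos (m * t) * cos t =
      (if m = -1 then π else 0) + (if m = 1 then π else 0) := by
  have product_to_sum (t : ℝ) : cos (m * t) * cos t =
      (1 / 2) * cos ((m + 1 : ℤ) * t) + (1 / 2) * cos ((m - 1 : ℤ) * t) := by
    push_cast
    rw [add_mul, sub_mul, one_mul, cos_add, cos_sub]
    ring
  simp only [product_to_sum]
  rw [intervalIntegral.integral_add (Continuous.intervalIntegrable (by fun_prop) _ _)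
    (Continuous.intervalIntegrable (by fun_prop) _ _)]
  simp only [intervalIntegral.integral_const_mul, integral_cos_int_mul, sub_eq_zero,
    add_eq_zero_iff_eq_neg]
  split_ifs <;> ring

section FejerRieszKernel

/-- The nonnegative trigonometric polynomial `|∑_{j ≤ n} a_j e^{ijt}|²` with real coefficients
`a_j`, as in the Fejér–Riesz theorem. -/
noncomputable def fejerRieszKernel (n : ℕ) (a : ℕ → ℝ) (t : ℝ) : ℝ :=
  (∑ j ∈ Finset.range (n + 1), a j * cos (j * t)) ^ 2 +
    (∑ j ∈ Finset.range (n + 1), a j * sin (j * t)) ^ 2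

variable (n : ℕ) (a : ℕ → ℝ)

lemma fejerRieszKernel_nonneg (t : ℝ) : 0 ≤ fejerRieszKernel n a t := by
  unfold fejerRieszKernel
  positivity

lemma fejerRieszKernel_eq_sum (t : ℝ) :
    fejerRieszKernel n a t = ∑ j ∈ Finset.range (n + 1), ∑ k ∈ Finset.range (n + 1),
      a j * a k * cos ((j - k : ℤ) * t) := by
  simp only [fejerRieszKernel, sq, Finset.sum_mul_sum, ← Finset.sum_add_distrib]
  refine Finset.sum_congr rfl fun j _ => Finset.sum_congr rfl fun k _ => ?_
  push_cast
  rw [sub_mul, cos_sub]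
  ring

lemma fejerRieszKernel_mem_trigPolynomial : fejerRieszKernel n a ∈ trigPolynomial ℝ n := by
  have eq_sum : fejerRieszKernel n a = ∑ j ∈ Finset.range (n + 1), ∑ k ∈ Finset.range (n + 1),
      (a j * a k) • fun t => cos ((j - k : ℤ) * t) := by
    ext t
    simp [fejerRieszKernel_eq_sum]
  rw [eq_sum]
  refine sum_mem fun j hj => sum_mem fun k hk => Submodule.smul_mem _ _ ?_
  rw [Finset.mem_range] at hj hk
  exact cos_int_mul_mem_trigPolynomial (by lia)

lemma integral_fejerRieszKernel_mul {g : ℝ → ℝ} (hg : Continuous g) :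
    ∫ t in (-π)..π, fejerRieszKernel n a t * g t =
      ∑ j ∈ Finset.range (n + 1), ∑ k ∈ Finset.range (n + 1),
        a j * a k * ∫ t in (-π)..π, cos ((j - k : ℤ) * t) * g t := by
  simp only [fejerRieszKernel_eq_sum, Finset.sum_mul, mul_assoc,
    ← intervalIntegral.integral_const_mul]
  rw [intervalIntegral.integral_finsetSum fun j _ =>
    Continuous.intervalIntegrable (by fun_prop) _ _]
  refine Finset.sum_congr rfl fun j _ => ?_
  rw [intervalIntegral.integral_finsetSum fun k _ =>
    Continuous.intervalIntegrable (by fun_prop) _ _]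

lemma integral_fejerRieszKernel :
    ∫ t in (-π)..π, fejerRieszKernel n a t = 2 * π * ∑ j ∈ Finset.range (n + 1), a j ^ 2 := by
  have expansion := integral_fejerRieszKernel_mul n a (g := fun _ => 1) continuous_const
  simp only [mul_one] at expansion
  rw [expansion, Finset.mul_sum]
  refine Finset.sum_congr rfl fun j hj => ?_
  simp only [integral_cos_int_mul, sub_eq_zero, Nat.cast_inj, mul_ite, mul_zero,
    Finset.sum_ite_eq, if_pos hj]
  ring

lemma integral_fejerRieszKernel_mul_cos :
    ∫ t in (-π)..π, fejerRieszKernel n a t * cos t =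
      2 * π * ∑ j ∈ Finset.range n, a j * a (j + 1) := by
  have sum_superdiagonal : ∑ j ∈ Finset.range (n + 1), ∑ k ∈ Finset.range (n + 1),
      (if k = j + 1 then a j * a k * π else 0) = π * ∑ j ∈ Finset.range n, a j * a (j + 1) := by
    simp only [Finset.sum_ite_eq', Finset.mem_range, add_lt_add_iff_right]
    rw [Finset.sum_range_succ, if_neg (lt_irrefl n), add_zero, Finset.mul_sum]
    refine Finset.sum_congr rfl fun j hj => ?_
    rw [if_pos (Finset.mem_range.1 hj)]
    ring
  have sum_subdiagonal : ∑ j ∈ Finset.range (n + 1), ∑ k ∈ Finset.range (n + 1),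
      (if j = k + 1 then a j * a k * π else 0) = π * ∑ j ∈ Finset.range n, a j * a (j + 1) := by
    rw [Finset.sum_comm, ← sum_superdiagonal]
    simp only [mul_comm (a _) (a _)]
  have superdiagonal_iff (j k : ℕ) : (j - k : ℤ) = -1 ↔ k = j + 1 := by lia
  have subdiagonal_iff (j k : ℕ) : (j - k : ℤ) = 1 ↔ j = k + 1 := by lia
  rw [integral_fejerRieszKernel_mul n a continuous_cos]
  simp only [integral_cos_int_mul_mul_cos, superdiagonal_iff, subdiagonal_iff, mul_add, mul_ite,
    mul_zero, Finset.sum_add_distrib, sum_superdiagonal, sum_subdiagonal]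
  ring

end FejerRieszKernel

lemma cos_mul_sum_sin_sq (θ : ℝ) (n : ℕ) :
    cos θ * ∑ j ∈ Finset.range (n + 1), sin ((j + 1) * θ) ^ 2 =
      ∑ j ∈ Finset.range n, sin ((j + 1) * θ) * sin ((j + 2) * θ) +
        sin ((n + 1) * θ) * sin ((n + 2) * θ) / 2 := by
  have three_term (m : ℝ) :
      cos θ * sin ((m + 1) * θ) = (sin (m * θ) + sin ((m + 2) * θ)) / 2 := by
    rw [show m * θ = (m + 1) * θ - θ by ring, show (m + 2) * θ = (m + 1) * θ + θ by ring, sin_sub,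
      sin_add]
    ring
  induction n with
  | zero =>
    have := three_term 0
    norm_num at this ⊢
    linear_combination sin θ * this
  | succ n ih =>
    rw [Finset.sum_range_succ, mul_add, ih, Finset.sum_range_succ _ n]
    have := three_term (n + 1)
    push_cast
    simp only [add_assoc, one_add_one_eq_two, show (1 + 2 : ℝ) = 3 by norm_num] at this ⊢
    linear_combination sin ((n + 2) * θ) * this

section KorovkinKernel

/-- The Fejér–Korovkin kernel, normalised to have integral `1` over a period. Its coefficients form
the top eigenvector of the path graph on `n + 1` vertices, which maximises the first cosine moment
among all normalised kernels `fejerRieszKernel n a`. -/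
noncomputable def korovkinKernel (n : ℕ) (t : ℝ) : ℝ :=
  (2 * π * ∑ j ∈ Finset.range (n + 1), sin ((j + 1) * (π / (n + 2))) ^ 2)⁻¹ *
    fejerRieszKernel n (fun j => sin ((j + 1) * (π / (n + 2)))) t

variable (n : ℕ)

lemma korovkinKernel_mem_trigPolynomial : korovkinKernel n ∈ trigPolynomial ℝ n :=
  Submodule.smul_mem _ _ (fejerRieszKernel_mem_trigPolynomial n _)

lemma continuous_korovkinKernel : Continuous (korovkinKernel n) :=
  continuous_of_mem_trigPolynomial (korovkinKernel_mem_trigPolynomial n)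

lemma korovkinKernel_nonneg (t : ℝ) : 0 ≤ korovkinKernel n t :=
  mul_nonneg (by positivity) (fejerRieszKernel_nonneg n _ t)

lemma sum_sin_sq_pos : 0 < ∑ j ∈ Finset.range (n + 1), sin ((j + 1) * (π / (n + 2))) ^ 2 := by
  refine Finset.sum_pos (fun j hj => pow_pos (sin_pos_of_pos_of_lt_pi (by positivity) ?_) 2)
    Finset.nonempty_range_add_one
  have hj : (j : ℝ) + 1 < n + 2 := by
    exact_mod_cast (by simpa using hj : j + 1 < n + 2)
  rw [← mul_div_assoc, div_lt_iff₀ (by positivity), mul_comm]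
  gcongr

lemma integral_korovkinKernel : ∫ t in (-π)..π, korovkinKernel n t = 1 := by
  simp only [korovkinKernel]
  rw [intervalIntegral.integral_const_mul, integral_fejerRieszKernel]
  exact inv_mul_cancel₀ (mul_pos two_pi_pos (sum_sin_sq_pos n)).ne'

lemma integral_korovkinKernel_mul_cos :
    ∫ t in (-π)..π, korovkinKernel n t * cos t = cos (π / (n + 2)) := by
  have sin_end : sin ((n + 2) * (π / (n + 2))) = 0 := by
    rw [mul_div_cancel₀ _ (by positivity), sin_pi]
  have eigen := cos_mul_sum_sin_sq (π / (n + 2)) n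
  rw [sin_end, mul_zero, zero_div, add_zero] at eigen
  simp only [korovkinKernel, mul_assoc _ _ (cos _)]
  rw [intervalIntegral.integral_const_mul, integral_fejerRieszKernel_mul_cos]
  push_cast
  simp only [add_assoc, one_add_one_eq_two]
  rw [← eigen, inv_mul_eq_div, mul_left_comm, mul_div_assoc,
    div_self (mul_pos two_pi_pos (sum_sin_sq_pos n)).ne', mul_one]

lemma integral_korovkinKernel_mul_abs_le :
    ∫ t in (-π)..π, korovkinKernel n t * |t| ≤ π ^ 2 / 2 / (n + 2) := by
  set θ : ℝ := π / (n + 2) with hθ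
  have hθ0 : 0 < θ := by positivity
  have one_sub_cos_le : 1 - cos θ ≤ θ ^ 2 / 2 := by linarith [one_sub_sq_div_two_le_cos (x := θ)]
  calc ∫ t in (-π)..π, korovkinKernel n t * |t|
      ≤ π * θ / 2 / 2 + π ^ 2 / (4 * (π * θ / 2)) * (1 - cos θ) := by
        rw [hθ, ← integral_korovkinKernel_mul_cos]
        exact integral_mul_abs_le (continuous_korovkinKernel n) (korovkinKernel_nonneg n)
          (integral_korovkinKernel n) (by positivity)
    _ ≤ π * θ / 2 / 2 + π ^ 2 / (4 * (π * θ / 2)) * (θ ^ 2 / 2) := by gcongr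
    _ = π ^ 2 / 2 / (n + 2) := by
        rw [show π ^ 2 / 2 / (n + 2) = π * θ / 2 by rw [hθ]; ring]
        field_simp
        ring

end KorovkinKernel

section Periodic

variable {E : Type*} [NormedAddCommGroup E] [NormedSpace ℝ E] {f : ℝ → E} {p : ℝ}

lemma periodic_iteratedDeriv (hp : Function.Periodic f p) (k : ℕ) :
    Function.Periodic (iteratedDeriv k f) p := fun x => by
  rw [← congrFun (iteratedDeriv_comp_add_const k f p) x, funext hp]

lemma lipschitzWith_iteratedDeriv_of_periodic (hp : Function.Periodic f p) (hp0 : p ≠ 0) {k : ℕ}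
    (hf : ContDiff ℝ (k + 1) f) :
    LipschitzWith (⨆ y, ‖iteratedDeriv (k + 1) f y‖₊) (iteratedDeriv k f) := by
  have hcont : Continuous (iteratedDeriv (k + 1) f) :=
    hf.continuous_iteratedDeriv (k + 1) (by norm_cast)
  have hbdd : BddAbove (Set.range fun y => ‖iteratedDeriv (k + 1) f y‖₊) :=
    (((periodic_iteratedDeriv hp (k + 1)).comp nnnorm).compact_of_continuous hp0
      hcont.nnnorm).bddAbove
  refine lipschitzWith_of_nnnorm_deriv_le
    (hf.differentiable_iteratedDeriv k (by norm_cast; simp)) fun y => ?_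
  rw [← iteratedDeriv_succ]
  exact le_ciSup hbdd y

end Periodic

theorem jackson_inequality_univariate_smooth_general {E : Type*} [NormedAddCommGroup E]
    [NormedSpace ℝ E] [CompleteSpace E] {K : ℕ} {f : ℝ → E} (hp : Function.Periodic f (2 * π))
    (hf : ContDiff ℝ K f) {L : ℝ≥0} (hL : LipschitzWith L (iteratedDeriv K f)) (n : ℕ) :
    ∃ T ∈ trigPolynomial E n, ∀ x, ‖f x - T x‖ ≤ (π ^ 2 / 2 / (n + 2)) ^ (K + 1) * L := by
  refine ⟨f - (kernelError (korovkinKernel n))^[K + 1] f,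
    sub_iterate_kernelError_mem_trigPolynomial (korovkinKernel_mem_trigPolynomial n)
      hf.continuous hp (K + 1), fun x => ?_⟩
  rw [Pi.sub_apply, sub_sub_cancel]
  exact norm_iterate_kernelError_le (c := ⟨π ^ 2 / 2 / (n + 2), by positivity⟩)
    (continuous_korovkinKernel n) (korovkinKernel_nonneg n) (integral_korovkinKernel n)
    (integral_korovkinKernel_mul_abs_le n) hf hL x

/-- Jackson's theorem for `C^{K+1}` periodic functions: uniform approximation
by a real trigonometric polynomial of degree at most `⌈(K+3)/2⌉⌊N/2⌋` with
error `≤ C_K ‖f^{(K+1)}‖_∞ / N^{K+1}`, where `C_K` depends only on `K`. -/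
theorem jackson_inequality_univariate_smooth (K : ℕ) :
    ∃ C : ℝ, 0 < C ∧
      ∀ f : ℝ → ℝ, Function.Periodic f (2 * π) → ContDiff ℝ (K + 1) f →
        ∀ N : ℕ, 1 ≤ N →
          ∃ a b : ℕ → ℝ,
            ∀ x : ℝ,
              |f x - (a 0 + ∑ n ∈ Finset.Icc 1 (((K + 3 + 1) / 2) * (N / 2)),
                  (a n * Real.cos (n * x) + b n * Real.sin (n * x)))|
                ≤ C * (⨆ y : ℝ, |iteratedDeriv (K + 1) f y|) / (N : ℝ) ^ (K + 1) := by
  refine ⟨(π ^ 2 / 2) ^ (K + 1), by positivity, fun f hp hf N hN => ?_⟩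
  set D := (K + 3 + 1) / 2 * (N / 2)
  obtain ⟨T, hT, hfT⟩ := jackson_inequality_univariate_smooth_general hp (hf.of_le (by simp))
    (lipschitzWith_iteratedDeriv_of_periodic hp two_pi_pos.ne' hf) D
  obtain ⟨a, b, hab⟩ := exists_const_add_sum_Icc_of_mem_trigPolynomial hT
  have hND : (N : ℝ) ≤ D + 2 := by
    have : 2 * (N / 2) ≤ D := Nat.mul_le_mul_right _ (by lia)
    exact_mod_cast (by lia : N ≤ D + 2)
  refine ⟨a, b, fun x => ?_⟩
  calc |f x - (a 0 + ∑ n ∈ Finset.Icc 1 D, (a n * cos (n * x) + b n * sin (n * x)))|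
      = ‖f x - T x‖ := by
        simp only [hab, smul_eq_mul, mul_comm (cos _), mul_comm (sin _), norm_eq_abs]
    _ ≤ (π ^ 2 / 2 / (D + 2)) ^ (K + 1) * ⨆ y, |iteratedDeriv (K + 1) f y| := by
        simpa only [NNReal.coe_iSup, coe_nnnorm, norm_eq_abs] using hfT x
    _ ≤ (π ^ 2 / 2 / N) ^ (K + 1) * ⨆ y, |iteratedDeriv (K + 1) f y| := by
        gcongr
        exact Real.iSup_nonneg fun y => abs_nonneg _
    _ = (π ^ 2 / 2) ^ (K + 1) * (⨆ y, |iteratedDeriv (K + 1) f y|) / N ^ (K + 1) := by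
        rw [div_pow, div_mul_eq_mul_div]
end
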